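/- Let d ≥ 1 and let (u_n) be a bounded sequence in L²(𝕋^d), with Fourier coefficients û_n : ℤ^d → ℂ, satisfying condition (S): there exists a sequence of positive reals (h_n) tending to zero such that limsup_{n→∞} Σ_{|l| < δ/h_n} |û_n(l)|² → 0 as δ → 0⁺, and limsup_{n→∞} Σ_{|l| > R/h_n} |û_n(l)|² → 0 as R → ∞. Let ν be a finite positive measure on 𝕋^d × 𝕋 which is a weak-∗ accumulation point of the densities (|e^{itΔ}u_n|²), i.e. there is a subsequence (u_{n′}) such that for every continuous a : 𝕋^d → ℂ and every continuous φ : 𝕋 → ℂ, ∫_{𝕋}∫_{𝕋^d} φ(t) a(x) |e^{itΔ}u_{n′}(x)|² dx dt → ∫_{𝕋^d×𝕋} φ(t) a(x) ν(dx,dt). Let ν̂(l,s) := ∫_{𝕋^d×𝕋} e^{−i(l·x+st)} ν(dx,dt) for (l,s) ∈ ℤ^d × ℤ be the Fourier coefficients of ν. Then Σ_{(l,s)∈ℤ^d×ℤ} |ν̂(l,s)|^d < ∞, i.e. ‖ν̂‖_{ℓ^d(ℤ^{d+1})} < ∞. -/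

import Mathlib

open scoped BigOperators Real
open MeasureTheory Matrix Filter

attribute [local instance] Classical.propDecidable

local instance : Fact ((0 : ℝ) < 2 * π) := ⟨by positivity⟩

/-- The solution `e^{itΔ}u(x) = Σ_k û(k) e^{i(k·x - |k|²t)}` of the Schrödinger equation
on the torus `𝕋^d = ℝ^d/2πℤ^d`, as a function on `𝕋^d × 𝕋`, where `c = û` are the
Fourier coefficients of the initial datum `u`. -/
noncomputable def schrodingerSol (d : ℕ) (c : (Fin d → ℤ) → ℂ) :
    (Fin d → AddCircle (2 * π)) × AddCircle (2 * π) → ℂ :=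
  fun p => ∑' k : Fin d → ℤ,
    c k * (∏ i : Fin d, fourier (k i) (p.1 i)) * fourier (-(k ⬝ᵥ k)) p.2

/-- The Euclidean length of a lattice vector `l ∈ ℤ^d`. -/
noncomputable def znorm {d : ℕ} (l : Fin d → ℤ) : ℝ :=
  Real.sqrt (∑ i : Fin d, ((l i : ℝ)) ^ 2)
noncomputable def evF {d : ℕ} (x : Fin d → ℤ) : ((Fin d → ℚ) × ℚ) →ₗ[ℚ] ℚ :=
  (LinearMap.fst ℚ _ _).dualMap (dotProductBilin ℚ ℚ (fun i => (x i : ℚ))) - LinearMap.snd ℚ _ _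

def castP {d : ℕ} (L : (Fin d → ℤ) × ℤ) : (Fin d → ℚ) × ℚ := (fun i => (L.1 i : ℚ), (L.2 : ℚ))

lemma evF_apply {d : ℕ} (x : Fin d → ℤ) (p : (Fin d → ℚ) × ℚ) :
    evF x p = (∑ i, (x i : ℚ) * p.1 i) - p.2 := by
  simp [evF, dotProduct]

lemma evF_cast {d : ℕ} (x : Fin d → ℤ) (L : (Fin d → ℤ) × ℤ) :
    evF x (castP L) = 0 ↔ x ⬝ᵥ L.1 = L.2 := by
  rw [evF_apply, sub_eq_zero]
  simp only [castP, dotProduct]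
  exact_mod_cast Iff.rfl

lemma bad_unique {d : ℕ} (j0 : Fin d) (L : (Fin d → ℤ) × ℤ) (W : Fin d → (Fin d → ℤ) × ℤ)
    (hL : L ≠ 0) (k k' : Fin d → Fin d → ℤ)
    (h1 : ∀ i, k i ⬝ᵥ L.1 = L.2) (h1' : ∀ i, k' i ⬝ᵥ L.1 = L.2)
    (h2 : ∀ j i, i ≠ j → k i ⬝ᵥ (W j).1 = (W j).2)
    (h2' : ∀ j i, i ≠ j → k' i ⬝ᵥ (W j).1 = (W j).2)
    (h3 : ∀ j, k j ⬝ᵥ (W j).1 ≠ (W j).2) : k j0 = k' j0 := by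
  simp only [← evF_cast, ne_eq] at h1 h1' h2 h2' h3
  set b : Option (Fin d) → (Fin d → ℚ) × ℚ := fun o => o.elim (castP L) (fun j => castP (W j)) with hb
  have hL' : castP L ≠ 0 := by
    intro h
    apply hL
    ext i
    · have := congrFun (congrArg Prod.fst h) i
      simpa [castP] using this
    · have := congrArg Prod.snd h
      simpa [castP] using this
  have hli : LinearIndependent ℚ b := by
    rw [Fintype.linearIndependent_iff]
    intro g hg
    rw [Fintype.sum_option] at hg
    have hs : ∀ i, g (some i) = 0 := by
      intro i
      have := congrArg (evF (k i)) hg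
      simp only [map_add, map_sum, map_smul, hb, Option.elim, map_zero, h1, smul_zero, zero_add] at this
      rw [Finset.sum_eq_single i] at this
      · simpa [h3 i] using this
      · intro j _ hj
        rw [h2 j i hj.symm, smul_zero]
      · simp
    intro o
    cases o with
    | some i => exact hs i
    | none =>
      simp only [hs, zero_smul, Finset.sum_const_zero, add_zero] at hg
      simpa [hb, hL'] using hg
  have hspan : Submodule.span ℚ (Set.range b) = ⊤ :=
    hli.span_eq_top_of_card_eq_finrank' (by simp)
  set X := evF (k j0) - evF (k' j0) with hX
  have hX' : evF (k j0) (castP (W j0)) • X - X (castP (W j0)) • evF (k j0) = 0 := by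
    apply LinearMap.ext_on_range hspan
    intro o
    cases o with
    | none => simp [hb, hX, h1, h1']
    | some j =>
      by_cases hj : j0 = j
      · subst hj
        simp [hb, mul_comm]
      · simp [hb, hX, h2 j j0 hj, h2' j j0 hj]
  have e1 := congrArg (fun f => f (0, 1)) hX'
  simp [hX, evF_apply] at e1
  have e2 : X (castP (W j0)) = 0 := by simp [hX, evF_apply, e1]
  rw [e2] at hX'
  simp only [zero_smul, sub_zero, smul_eq_zero, h3 j0, false_or] at hX'
  funext i
  have e3 := congrArg (fun f => f (Pi.single i 1, 0)) hX'
  simp [hX, evF_apply, Pi.single_apply, sub_eq_zero] at e3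
  exact e3

lemma fin_bad {d : ℕ} (j0 : Fin d) (G : Finset ((Fin d → ℤ) × ℤ)) :
    ∃ B : Finset (Fin d → ℤ), ∀ (k : Fin d → Fin d → ℤ), ∀ L ∈ G, L ≠ 0 →
      (∀ i, k i ⬝ᵥ L.1 = L.2) → k j0 ∉ B →
      ∃ j, ∀ L' ∈ G, (∀ i, i ≠ j → k i ⬝ᵥ L'.1 = L'.2) → k j ⬝ᵥ L'.1 = L'.2 := by
  let S : ((Fin d → ℤ) × ℤ) × (Fin d → (Fin d → ℤ) × ℤ) → Set (Fin d → ℤ) := fun q =>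
    {x | q.1 ≠ 0 ∧ ∃ k : Fin d → Fin d → ℤ, k j0 = x ∧ (∀ i, k i ⬝ᵥ q.1.1 = q.1.2) ∧
      (∀ j i, i ≠ j → k i ⬝ᵥ (q.2 j).1 = (q.2 j).2) ∧ ∀ j, k j ⬝ᵥ (q.2 j).1 ≠ (q.2 j).2}
  have hfin : (⋃ q ∈ (G ×ˢ Fintype.piFinset (fun _ : Fin d => G) : Finset _), S q).Finite := by
    apply Set.Finite.biUnion (Finset.finite_toSet _)
    intro q _
    apply Set.Subsingleton.finite
    rintro x ⟨h0, k, rfl, h1, h2, h3⟩ x' ⟨-, k', rfl, h1', h2', h3'⟩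
    exact bad_unique j0 q.1 q.2 h0 k k' h1 h1' h2 h2' h3
  refine ⟨hfin.toFinset, ?_⟩
  intro k L hL hL0 h1 hk
  by_contra hcon
  push Not at hcon
  choose W hW h2 h3 using hcon
  apply hk
  rw [Set.Finite.mem_toFinset]
  simp only [Set.mem_iUnion]
  refine ⟨(L, W), ?_, hL0, k, rfl, h1, h2, h3⟩
  simp [hL, hW]

lemma sum_prod_le {d : ℕ} {α ι : Type*} (T : Finset ι) (y : ι → Fin d → α)
    (hy : Set.InjOn y T) (f : α → ℝ) (hf : ∀ x, 0 ≤ f x) (M : ℝ)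
    (hM : ∀ Q : Finset α, ∑ k ∈ Q, f k ≤ M) :
    ∑ t ∈ T, ∏ i, f (y t i) ≤ M ^ d := by
  rw [← Finset.sum_image (f := fun z : Fin d → α => ∏ i, f (z i)) hy]
  set Q : Fin d → Finset α := fun i => (T.image y).image (fun z => z i)
  calc _ ≤ ∑ z ∈ Fintype.piFinset Q, ∏ i, f (z i) := by
        apply Finset.sum_le_sum_of_subset_of_nonneg
        · intro z hz
          rw [Fintype.mem_piFinset]
          intro i
          exact Finset.mem_image_of_mem _ hz
        · intro z _ _
          exact Finset.prod_nonneg fun i _ => hf _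
    _ = ∏ i, ∑ k ∈ Q i, f k := by rw [Finset.prod_univ_sum]
    _ ≤ ∏ i : Fin d, M := Finset.prod_le_prod
        (fun i _ => Finset.sum_nonneg fun k _ => hf k) (fun i _ => hM _)
    _ = M ^ d := by simp

lemma int_vec_eq {d : ℕ} (l l' : Fin d → ℤ) (h : (l - l') ⬝ᵥ (l - l') = 0) : l = l' := by
  rwa [dotProduct_self_eq_zero, sub_eq_zero] at h

lemma comb {d : ℕ} (j0 : Fin d) (F : Finset ((Fin d → ℤ) × ℤ)) (h0 : (0 : (Fin d → ℤ) × ℤ) ∉ F) :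
    ∃ B : Finset (Fin d → ℤ), ∀ (a : (Fin d → ℤ) → ℝ) (M : ℝ), (∀ k, 0 ≤ a k) →
      (∀ Q : Finset (Fin d → ℤ), ∑ k ∈ Q, a k ^ 2 ≤ M) → ∀ Q : Finset (Fin d → ℤ),
      ∑ τ ∈ F, (∑ k ∈ Q with (k ∉ B ∧ 2 * (k ⬝ᵥ τ.1) = τ.1 ⬝ᵥ τ.1 - τ.2),
        a k * a (k - τ.1)) ^ d ≤ d * M ^ d := by
  set G : Finset ((Fin d → ℤ) × ℤ) := (F ×ˢ F).image (fun q =>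
    ((2 : ℤ) • q.2.1, (q.2.1 ⬝ᵥ q.2.1 - q.2.2) + 2 * ((q.1.1 - q.2.1) ⬝ᵥ q.2.1))) with hG
  obtain ⟨B, hB⟩ := fin_bad j0 G
  refine ⟨B, ?_⟩
  intro a M ha hM Q
  set QT : (Fin d → ℤ) × ℤ → Finset (Fin d → ℤ) := fun τ =>
    {k ∈ Q | k ∉ B ∧ 2 * (k ⬝ᵥ τ.1) = τ.1 ⬝ᵥ τ.1 - τ.2} with hQT
  set T : Finset (Σ _ : (Fin d → ℤ) × ℤ, (Fin d → Fin d → ℤ)) :=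
    F.sigma (fun τ => Fintype.piFinset (fun _ : Fin d => QT τ)) with hT
  set w : (Σ _ : (Fin d → ℤ) × ℤ, (Fin d → Fin d → ℤ)) → ℝ := fun t =>
    ∏ i, (a (t.2 i) * a (t.2 i - t.1.1)) with hw
  have hw0 : ∀ t, 0 ≤ w t := fun t => Finset.prod_nonneg fun i _ => mul_nonneg (ha _) (ha _)
  have hsum : ∑ τ ∈ F, (∑ k ∈ QT τ, a k * a (k - τ.1)) ^ d = ∑ t ∈ T, w t := by
    rw [hT, Finset.sum_sigma]
    apply Finset.sum_congr rfl
    intro τ _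
    rw [← Fin.prod_const d, Finset.prod_univ_sum]
  rw [hsum]
  set P : Fin d → (Σ _ : (Fin d → ℤ) × ℤ, (Fin d → Fin d → ℤ)) → Prop := fun j t =>
    ∀ L' ∈ G, (∀ i, i ≠ j → t.2 i ⬝ᵥ L'.1 = L'.2) → t.2 j ⬝ᵥ L'.1 = L'.2 with hP
  have hTm : ∀ t ∈ T, t.1 ∈ F ∧ ∀ i, t.2 i ∉ B ∧
      2 * (t.2 i ⬝ᵥ t.1.1) = t.1.1 ⬝ᵥ t.1.1 - t.1.2 := by
    intro t ht
    rw [hT, Finset.mem_sigma, Fintype.mem_piFinset] at ht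
    refine ⟨ht.1, fun i => ?_⟩
    have := ht.2 i
    rw [hQT, Finset.mem_filter] at this
    exact this.2
  have hmemG : ∀ τ ∈ F, ∀ τ' ∈ F, (((2 : ℤ) • τ'.1,
      (τ'.1 ⬝ᵥ τ'.1 - τ'.2) + 2 * ((τ.1 - τ'.1) ⬝ᵥ τ'.1)) : (Fin d → ℤ) × ℤ) ∈ G := by
    intro τ h τ' h'
    rw [hG, Finset.mem_image]
    exact ⟨(τ, τ'), by simp [h, h'], rfl⟩
  have hPex : ∀ t ∈ T, ∃ j, P j t := by
    intro t ht
    obtain ⟨h1, h2⟩ := hTm t ht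
    have hm := hmemG _ h1 _ h1
    refine hB t.2 _ hm ?_ ?_ (h2 j0).1
    · intro hz
      have e1 : t.1.1 = 0 := by
        have := congrArg Prod.fst hz
        funext i
        have := congrFun this i
        simpa only [Pi.smul_apply, smul_eq_mul, Prod.fst_zero, Pi.zero_apply, mul_eq_zero,
          OfNat.ofNat_ne_zero, false_or] using this
      have e2 : t.1.2 = 0 := by
        have := congrArg Prod.snd hz
        simpa [e1] using this
      apply h0
      have : t.1 = 0 := Prod.ext e1 e2
      rwa [← this]
    · intro i
      have := (h2 i).2
      simp only [this, dotProduct_smul, sub_self, zero_dotProduct, mul_zero, add_zero, smul_eq_mul]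
  have hPj : ∀ j, ∑ t ∈ T with P j t, w t ≤ M ^ d := by
    intro j
    set y : (Σ _ : (Fin d → ℤ) × ℤ, (Fin d → Fin d → ℤ)) → Fin d → Fin d → ℤ :=
      fun t i => if i = j then t.2 i - t.1.1 else t.2 i with hy
    set z : (Σ _ : (Fin d → ℤ) × ℤ, (Fin d → Fin d → ℤ)) → Fin d → Fin d → ℤ :=
      fun t i => if i = j then t.2 i else t.2 i - t.1.1 with hz
    have hfinish : ∀ t ∈ T, ∀ t' ∈ T, t.1.1 = t'.1.1 → t.2 = t'.2 → t = t' := by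
      rintro ⟨⟨l, s⟩, x⟩ ht ⟨⟨l', s'⟩, x'⟩ ht' h1 h2
      have e1 := ((hTm _ ht).2 j).2
      have e2 := ((hTm _ ht').2 j).2
      simp only at h1 h2 e1 e2
      subst h1 h2
      have : s = s' := by linarith
      rw [this]
    have hyi : Set.InjOn y (T.filter (P j)) := by
      intro t ht t' ht' hyy
      rw [Finset.mem_coe, Finset.mem_filter] at ht ht'
      obtain ⟨ht, hp⟩ := ht
      obtain ⟨ht', hp'⟩ := ht'
      obtain ⟨hF, hH⟩ := hTm t ht
      obtain ⟨hF', hH'⟩ := hTm t' ht'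
      have hoff : ∀ i, i ≠ j → t.2 i = t'.2 i := by
        intro i hi
        have := congrFun hyy i
        simpa [hy, hi] using this
      have hon : t.2 j - t.1.1 = t'.2 j - t'.1.1 := by
        have := congrFun hyy j
        simpa [hy] using this
      have q1 := hp _ (hmemG _ hF' _ hF') (by
        intro i hi
        simp only [hoff i hi, (hH' i).2, dotProduct_smul, sub_self, zero_dotProduct, mul_zero, add_zero, smul_eq_mul])
      have q2 := hp' _ (hmemG _ hF _ hF) (by
        intro i hi
        simp only [← hoff i hi, (hH i).2, dotProduct_smul, sub_self, zero_dotProduct, mul_zero, add_zero, smul_eq_mul])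
      have q3 := (hH j).2
      have q4 := (hH' j).2
      simp only [dotProduct_smul, sub_self, zero_dotProduct, mul_zero, add_zero, smul_eq_mul] at q1 q2
      have q5 : t.2 j - t'.2 j = t.1.1 - t'.1.1 := by
        rw [sub_eq_sub_iff_add_eq_add] at hon ⊢
        rw [hon, add_comm]
      have hl : t.1.1 = t'.1.1 := by
        apply int_vec_eq
        nth_rewrite 1 [← q5]
        rw [dotProduct_sub, sub_dotProduct, sub_dotProduct]
        linarith
      refine hfinish t ht t' ht' hl ?_
      funext i
      by_cases hi : i = j
      · subst hi
        rw [hl] at hon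
        exact sub_left_injective hon
      · exact hoff i hi
    have hzi : Set.InjOn z (T.filter (P j)) := by
      intro t ht t' ht' hyy
      rw [Finset.mem_coe, Finset.mem_filter] at ht ht'
      obtain ⟨ht, hp⟩ := ht
      obtain ⟨ht', hp'⟩ := ht'
      obtain ⟨hF, hH⟩ := hTm t ht
      obtain ⟨hF', hH'⟩ := hTm t' ht'
      have hoff : ∀ i, i ≠ j → t.2 i - t.1.1 = t'.2 i - t'.1.1 := by
        intro i hi
        have := congrFun hyy i
        simpa [hz, hi] using this
      have hon : t.2 j = t'.2 j := by
        have := congrFun hyy j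
        simpa [hz] using this
      have q1 := hp _ (hmemG _ hF _ hF') (by
        intro i hi
        have e : t.2 i = t'.2 i + (t.1.1 - t'.1.1) := by
          have := hoff i hi
          rw [sub_eq_iff_eq_add] at this
          rw [this]; abel
        rw [e]
        have := (hH' i).2
        simp only [dotProduct_smul, add_dotProduct, smul_eq_mul]
        linarith)
      have q2 := hp' _ (hmemG _ hF' _ hF) (by
        intro i hi
        have e : t'.2 i = t.2 i + (t'.1.1 - t.1.1) := by
          have := (hoff i hi).symm
          rw [sub_eq_iff_eq_add] at this
          rw [this]; abel
        rw [e]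
        have := (hH i).2
        simp only [dotProduct_smul, add_dotProduct, smul_eq_mul]
        linarith)
      have q3 := (hH j).2
      have q4 := (hH' j).2
      rw [hon] at q1 q3
      simp only [dotProduct_smul, smul_eq_mul, sub_dotProduct] at q1 q2
      have hl : t.1.1 = t'.1.1 := by
        apply int_vec_eq
        rw [dotProduct_sub, sub_dotProduct, sub_dotProduct]
        have := dotProduct_comm t'.1.1 t.1.1
        linarith
      refine hfinish t ht t' ht' hl ?_
      funext i
      by_cases hi : i = j
      · subst hi
        exact hon
      · have := hoff i hi
        rw [hl] at this
        exact sub_left_injective this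
    have b1 := sum_prod_le _ y hyi (fun k => a k ^ 2) (fun k => sq_nonneg _) M hM
    have b2 := sum_prod_le _ z hzi (fun k => a k ^ 2) (fun k => sq_nonneg _) M hM
    have hle : ∀ t, w t ≤ ((∏ i, a (y t i) ^ 2) + ∏ i, a (z t i) ^ 2) / 2 := by
      intro t
      have : w t = (∏ i, a (y t i)) * ∏ i, a (z t i) := by
        rw [← Finset.prod_mul_distrib]
        apply Finset.prod_congr rfl
        intro i _
        by_cases hi : i = j
        · simp [hy, hz, hi, mul_comm]
        · simp [hy, hz, hi]
      rw [this, Finset.prod_pow, Finset.prod_pow]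
      nlinarith [sq_nonneg ((∏ i, a (y t i)) - ∏ i, a (z t i))]
    calc _ ≤ ∑ t ∈ T with P j t, ((∏ i, a (y t i) ^ 2) + ∏ i, a (z t i) ^ 2) / 2 :=
          Finset.sum_le_sum fun t _ => hle t
      _ = ((∑ t ∈ T with P j t, ∏ i, a (y t i) ^ 2) +
            ∑ t ∈ T with P j t, ∏ i, a (z t i) ^ 2) / 2 := by
          rw [← Finset.sum_div, Finset.sum_add_distrib]
      _ ≤ M ^ d := by linarith
  calc ∑ t ∈ T, w t ≤ ∑ t ∈ T, ∑ j, if P j t then w t else 0 := by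
        apply Finset.sum_le_sum
        intro t ht
        obtain ⟨j, hj⟩ := hPex t ht
        have := Finset.single_le_sum (f := fun j => if P j t then w t else 0)
          (fun j _ => by split_ifs <;> simp [hw0 t]) (Finset.mem_univ j)
        simpa [hj] using this
    _ = ∑ j, ∑ t ∈ T with P j t, w t := by
        rw [Finset.sum_comm]
        simp only [Finset.sum_filter]
    _ ≤ ∑ j : Fin d, M ^ d := Finset.sum_le_sum fun j _ => hPj j
    _ = d * M ^ d := by simp

noncomputable def emF {d : ℕ} (l : Fin d → ℤ) (s : ℤ)
    (p : (Fin d → AddCircle (2 * π)) × AddCircle (2 * π)) : ℂ :=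
  (∏ i : Fin d, fourier (l i) (p.1 i)) * fourier s p.2

lemma em_continuous {d : ℕ} (l : Fin d → ℤ) (s : ℤ) : Continuous (emF l s) := by
  unfold emF
  fun_prop

lemma em_norm {d : ℕ} (l : Fin d → ℤ) (s : ℤ) (p) : ‖emF l s p‖ = 1 := by
  have h : ∀ (n : ℤ) (t : AddCircle (2 * π)), ‖(fourier n t : ℂ)‖ = 1 := fun n t => by
    rw [fourier_apply]; exact Circle.norm_coe _
  simp only [emF, norm_mul, norm_prod, h, Finset.prod_const_one, mul_one]

lemma em_mul {d : ℕ} (l l' : Fin d → ℤ) (s s' : ℤ) (p) :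
    emF l s p * emF l' s' p = emF (l + l') (s + s') p := by
  simp only [emF, Pi.add_apply, fourier_add, Finset.prod_mul_distrib]
  ring

lemma em_conj {d : ℕ} (l : Fin d → ℤ) (s : ℤ) (p) :
    (starRingEnd ℂ) (emF l s p) = emF (-l) (-s) p := by
  simp only [emF, Pi.neg_apply, fourier_neg, map_mul, map_prod]

lemma integral_fourier_zero (n : ℤ) (hn : n ≠ 0) :
    ∫ t : AddCircle (2 * π), (fourier n t : ℂ) = 0 :=
  integral_eq_zero_of_add_right_eq_neg (fourier_add_half_inv_index hn (by positivity))

lemma em_integral {d : ℕ} (l : Fin d → ℤ) (s : ℤ) (h : ¬ (l = 0 ∧ s = 0)) :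
    ∫ p, emF l s p = 0 := by
  unfold emF
  rw [Measure.volume_eq_prod]
  rw [integral_prod_mul (f := fun x : Fin d → AddCircle (2 * π) => ∏ i : Fin d, (fourier (l i) (x i) : ℂ))
    (g := fun t : AddCircle (2 * π) => (fourier s t : ℂ))]
  rw [integral_fintype_prod_volume_eq_prod (fun i (x : AddCircle (2 * π)) => (fourier (l i) x : ℂ))]
  by_cases hs : s = 0
  · have hl : l ≠ 0 := fun h' => h ⟨h', hs⟩
    obtain ⟨i, hi⟩ := Function.ne_iff.mp hl
    rw [Finset.prod_eq_zero (Finset.mem_univ i) (integral_fourier_zero _ hi), zero_mul]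
  · rw [integral_fourier_zero _ hs, mul_zero]

noncomputable def VV (d : ℕ) : ℝ :=
  (volume : Measure ((Fin d → AddCircle (2 * π)) × AddCircle (2 * π))).real Set.univ

lemma VV_nonneg (d : ℕ) : 0 ≤ VV d := measureReal_nonneg

lemma em_integral_le {d : ℕ} (l : Fin d → ℤ) (s : ℤ) :
    ‖∫ p, emF l s p‖ ≤ VV d := by
  have := norm_integral_le_of_norm_le_const (μ := (volume : Measure ((Fin d → AddCircle (2 * π)) × AddCircle (2 * π))))
    (f := emF l s) (C := 1) (Eventually.of_forall fun p => (em_norm l s p).le)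
  simpa [VV] using this

noncomputable def psiQ {d : ℕ} (c : (Fin d → ℤ) → ℂ) (Q : Finset (Fin d → ℤ))
    (p : (Fin d → AddCircle (2 * π)) × AddCircle (2 * π)) : ℂ :=
  ∑ k ∈ Q, c k * emF k (-(k ⬝ᵥ k)) p

lemma psiQ_continuous {d : ℕ} (c : (Fin d → ℤ) → ℂ) (Q : Finset (Fin d → ℤ)) :
    Continuous (psiQ c Q) := by
  unfold psiQ
  exact continuous_finsetSum _ fun k _ => continuous_const.mul (em_continuous _ _)

lemma integrable_of_cont {d : ℕ} (f : (Fin d → AddCircle (2 * π)) × AddCircle (2 * π) → ℂ)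
    (hf : Continuous f) : Integrable f volume := by
  exact hf.integrable_of_hasCompactSupport (HasCompactSupport.of_compactSpace f)

lemma finite_bound {d : ℕ} (c : (Fin d → ℤ) → ℂ) (Q : Finset (Fin d → ℤ)) (τ : (Fin d → ℤ) × ℤ) :
    ‖∫ p, emF (-τ.1) (-τ.2) p * ((‖psiQ c Q p‖ ^ 2 : ℝ) : ℂ)‖ ≤
      VV d * ∑ k ∈ Q with (2 * (k ⬝ᵥ τ.1) = τ.1 ⬝ᵥ τ.1 - τ.2), ‖c k‖ * ‖c (k - τ.1)‖ := by
  obtain ⟨l, s⟩ := τ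
  have e1 : ∀ p, emF (-l) (-s) p * ((‖psiQ c Q p‖ ^ 2 : ℝ) : ℂ) =
      ∑ k ∈ Q, ∑ j ∈ Q, (c k * (starRingEnd ℂ) (c j)) *
        emF (-l + (k + -j)) (-s + (-(k ⬝ᵥ k) + -(-(j ⬝ᵥ j)))) p := by
    intro p
    rw [Complex.ofReal_pow, ← Complex.mul_conj', psiQ, map_sum, Finset.sum_mul_sum, Finset.mul_sum]
    apply Finset.sum_congr rfl
    intro k _
    rw [Finset.mul_sum]
    apply Finset.sum_congr rfl
    intro j _
    rw [map_mul, em_conj, ← em_mul, ← em_mul]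
    ring
  simp only [e1]
  have hint : ∀ (z : ℂ) (l' : Fin d → ℤ) (s' : ℤ), Integrable (fun p => z * emF l' s' p) volume :=
    fun z l' s' => integrable_of_cont _ (continuous_const.mul (em_continuous _ _))
  rw [integral_finsetSum _ fun k _ => integrable_finsetSum _ fun j _ => hint _ _ _]
  refine (norm_sum_le _ _).trans ?_
  rw [Finset.mul_sum, Finset.sum_filter]
  apply Finset.sum_le_sum
  intro k _
  rw [integral_finsetSum _ fun j _ => hint _ _ _]
  simp only [integral_const_mul]
  have hz : ∀ j ∈ Q, ¬ (j = k - l ∧ 2 * (k ⬝ᵥ l) = l ⬝ᵥ l - s) →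
      (c k * (starRingEnd ℂ) (c j)) * ∫ p,
        emF (-l + (k + -j)) (-s + (-(k ⬝ᵥ k) + -(-(j ⬝ᵥ j)))) p = 0 := by
    intro j _ hj
    rw [em_integral, mul_zero]
    rintro ⟨h1, h2⟩
    have h1' : j = k - l := by
      have : j = k - l - (-l + (k + -j)) := by abel
      rw [h1, sub_zero] at this
      exact this
    apply hj
    refine ⟨h1', ?_⟩
    rw [h1'] at h2
    simp only [dotProduct_sub, sub_dotProduct] at h2
    have := dotProduct_comm k l
    linarith
  split_ifs with hc
  · have hz' : ∀ j ∈ Q, j ≠ k - l → (c k * (starRingEnd ℂ) (c j)) * ∫ p,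
        emF (-l + (k + -j)) (-s + (-(k ⬝ᵥ k) + -(-(j ⬝ᵥ j)))) p = 0 :=
      fun j hj hne => hz j hj fun h => hne h.1
    have hnn : 0 ≤ VV d * (‖c k‖ * ‖c (k - l)‖) := mul_nonneg (VV_nonneg d) (by positivity)
    by_cases hm : k - l ∈ Q
    · rw [Finset.sum_eq_single_of_mem _ hm hz', norm_mul, norm_mul, RCLike.norm_conj, mul_comm]
      exact mul_le_mul_of_nonneg_right (em_integral_le _ _) (by positivity)
    · rw [Finset.sum_eq_zero fun j hj => hz' j hj fun h => hm (h ▸ hj), norm_zero]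
      exact hnn
  · rw [Finset.sum_eq_zero fun j hj => hz j hj fun h => hc h.2, norm_zero]

lemma sol_eq_em {d : ℕ} (c : (Fin d → ℤ) → ℂ) (p) :
    schrodingerSol d c p = ∑' k, c k * emF k (-(k ⬝ᵥ k)) p := by
  unfold schrodingerSol emF
  simp only [mul_assoc]

lemma sol_zero {d : ℕ} (c : (Fin d → ℤ) → ℂ) (hc : ¬ Summable fun k => ‖c k‖) (p) :
    schrodingerSol d c p = 0 := by
  rw [sol_eq_em]
  apply tsum_eq_zero_of_not_summable
  intro h
  apply hc
  have := h.norm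
  simpa [norm_mul, em_norm] using this

lemma psi_tendsto {d : ℕ} (c : (Fin d → ℤ) → ℂ) (hc : Summable fun k => ‖c k‖)
    (τ : (Fin d → ℤ) × ℤ) :
    Tendsto (fun Q => ∫ p, emF (-τ.1) (-τ.2) p * ((‖psiQ c Q p‖ ^ 2 : ℝ) : ℂ)) atTop
      (nhds (∫ p, emF (-τ.1) (-τ.2) p * ((‖schrodingerSol d c p‖ ^ 2 : ℝ) : ℂ))) := by
  apply tendsto_integral_filter_of_dominated_convergence (fun _ => (∑' k, ‖c k‖) ^ 2)
  · refine Eventually.of_forall fun Q => Continuous.aestronglyMeasurable ?_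
    have := psiQ_continuous c Q
    have := em_continuous (-τ.1) (-τ.2)
    fun_prop
  · refine Eventually.of_forall fun Q => Eventually.of_forall fun p => ?_
    rw [norm_mul, em_norm, one_mul, Complex.norm_real, norm_pow, norm_norm]
    apply pow_le_pow_left₀ (norm_nonneg _)
    refine (norm_sum_le _ _).trans ?_
    simp only [norm_mul, em_norm, mul_one]
    exact hc.sum_le_tsum _ fun k _ => norm_nonneg _
  · exact integrable_const _
  · refine Eventually.of_forall fun p => ?_
    have hs : Summable fun k => c k * emF k (-(k ⬝ᵥ k)) p := by
      apply Summable.of_norm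
      simpa [norm_mul, em_norm] using hc
    have h1 : Tendsto (fun Q => psiQ c Q p) atTop (nhds (schrodingerSol d c p)) := by
      rw [sol_eq_em]
      exact hs.hasSum
    refine Tendsto.const_mul _ ?_
    exact (Complex.continuous_ofReal.tendsto _).comp (h1.norm.pow 2)

lemma main_bound {d : ℕ} (j0 : Fin d) (F : Finset ((Fin d → ℤ) × ℤ))
    (h0 : (0 : (Fin d → ℤ) × ℤ) ∉ F) :
    ∃ B : Finset (Fin d → ℤ), ∀ (c : (Fin d → ℤ) → ℂ) (M : ℝ),
      (Summable fun k => ‖c k‖ ^ 2) → ∑' k, ‖c k‖ ^ 2 ≤ M →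
      ∑ τ ∈ F, (max (‖∫ p, emF (-τ.1) (-τ.2) p * ((‖schrodingerSol d c p‖ ^ 2 : ℝ) : ℂ)‖ -
        VV d * (√M * ∑ k ∈ B, ‖c k‖)) 0) ^ d ≤ VV d ^ d * (d * M ^ d) := by
  obtain ⟨B, hB⟩ := comb j0 F h0
  refine ⟨B, fun c M hs hM => ?_⟩
  have hd : d ≠ 0 := by
    rintro rfl
    exact j0.elim0
  have hM0 : 0 ≤ M := (tsum_nonneg fun k => by positivity).trans hM
  have hQ : ∀ Q : Finset (Fin d → ℤ), ∑ k ∈ Q, ‖c k‖ ^ 2 ≤ M := fun Q =>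
    (hs.sum_le_tsum Q fun k _ => by positivity).trans hM
  have hV := VV_nonneg d
  have herr : 0 ≤ VV d * (√M * ∑ k ∈ B, ‖c k‖) := by
    have := Finset.sum_nonneg (s := B) fun k _ => norm_nonneg (c k)
    positivity
  have hle : ∀ k, ‖c k‖ ≤ √M := fun k => by
    apply Real.le_sqrt_of_sq_le
    simpa using hQ {k}
  by_cases hc : Summable fun k => ‖c k‖
  · have hlim : Tendsto (fun Q => ∑ τ ∈ F, (max (‖∫ p, emF (-τ.1) (-τ.2) p *
        ((‖psiQ c Q p‖ ^ 2 : ℝ) : ℂ)‖ - VV d * (√M * ∑ k ∈ B, ‖c k‖)) 0) ^ d) atTop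
        (nhds (∑ τ ∈ F, (max (‖∫ p, emF (-τ.1) (-τ.2) p *
          ((‖schrodingerSol d c p‖ ^ 2 : ℝ) : ℂ)‖ - VV d * (√M * ∑ k ∈ B, ‖c k‖)) 0) ^ d)) := by
      apply tendsto_finsetSum
      intro τ _
      exact ((((psi_tendsto c hc τ).norm).sub_const _).max tendsto_const_nhds).pow d
    refine le_of_tendsto' hlim fun Q => ?_
    have hc1 := hB (fun k => ‖c k‖) M (fun k => norm_nonneg _) hQ Q
    refine le_trans ?_ (mul_le_mul_of_nonneg_left hc1 (pow_nonneg hV d))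
    rw [Finset.mul_sum (s := F)]
    apply Finset.sum_le_sum
    intro τ _
    rw [← mul_pow]
    apply pow_le_pow_left₀ (le_max_right _ _)
    have hA : 0 ≤ ∑ k ∈ Q with (k ∉ B ∧ 2 * (k ⬝ᵥ τ.1) = τ.1 ⬝ᵥ τ.1 - τ.2),
        ‖c k‖ * ‖c (k - τ.1)‖ := Finset.sum_nonneg fun k _ => by positivity
    apply max_le _ (mul_nonneg hV hA)
    rw [sub_le_iff_le_add, ← mul_add]
    refine (finite_bound c Q τ).trans (mul_le_mul_of_nonneg_left ?_ hV)
    have hB2 : ∑ k ∈ B, ‖c k‖ * ‖c (k - τ.1)‖ ≤ √M * ∑ k ∈ B, ‖c k‖ := by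
      rw [Finset.mul_sum]
      apply Finset.sum_le_sum
      intro k _
      rw [mul_comm]
      exact mul_le_mul_of_nonneg_right (hle _) (norm_nonneg _)
    refine le_trans ?_ (add_le_add_right hB2 _)
    refine le_trans (Finset.sum_le_sum_of_subset_of_nonneg (t := {k ∈ Q | k ∉ B ∧
      2 * (k ⬝ᵥ τ.1) = τ.1 ⬝ᵥ τ.1 - τ.2} ∪ B) ?_ fun k _ _ => by positivity) ?_
    · intro k hk
      rw [Finset.mem_filter] at hk
      rw [Finset.mem_union, Finset.mem_filter]
      by_cases hkB : k ∈ B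
      · exact Or.inr hkB
      · exact Or.inl ⟨hk.1, hkB, hk.2⟩
    · rw [← Finset.sum_union_inter]
      have := Finset.sum_nonneg (s := {k ∈ Q | k ∉ B ∧
        2 * (k ⬝ᵥ τ.1) = τ.1 ⬝ᵥ τ.1 - τ.2} ∩ B) (f := fun k => ‖c k‖ * ‖c (k - τ.1)‖)
        fun k _ => by positivity
      linarith
  · have hz : ∀ τ ∈ F, (max (‖∫ p, emF (-τ.1) (-τ.2) p *
        ((‖schrodingerSol d c p‖ ^ 2 : ℝ) : ℂ)‖ - VV d * (√M * ∑ k ∈ B, ‖c k‖)) 0) ^ d = 0 := by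
      intro τ _
      simp only [sol_zero c hc]
      simp [hd, herr]
    rw [Finset.sum_eq_zero hz]
    positivity

/-- Theorem 2: if a bounded sequence `(u_n)` in `L²(𝕋^d)` is `(h_n)`-oscillating
(condition (S)), then any weak-∗ accumulation point `ν` of `(|e^{itΔ}u_n|²)` has Fourier
coefficients in `ℓ^d(ℤ^{d+1})`. -/
theorem lp_regularity_of_weak_star_limit (d : ℕ) (hd : 1 ≤ d)
    (u : ℕ → (Fin d → ℤ) → ℂ)
    (hsq : ∀ n, Summable fun k : Fin d → ℤ => ‖u n k‖ ^ 2)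
    (hbd : ∃ M : ℝ, ∀ n, (∑' k : Fin d → ℤ, ‖u n k‖ ^ 2) ≤ M)
    -- condition (S): there is `h_n → 0`, `h_n > 0`, with no mass at frequencies
    -- `≪ 1/h_n` or `≫ 1/h_n`
    (h : ℕ → ℝ) (hpos : ∀ n, 0 < h n) (hto : Tendsto h atTop (nhds 0))
    (hS1 : Tendsto
      (fun δ : ℝ => limsup
        (fun n => ∑' k : Fin d → ℤ, if znorm k < δ / h n then ‖u n k‖ ^ 2 else 0)
        atTop)
      (nhdsWithin 0 (Set.Ioi 0)) (nhds 0))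
    (hS2 : Tendsto
      (fun R : ℝ => limsup
        (fun n => ∑' k : Fin d → ℤ, if R / h n < znorm k then ‖u n k‖ ^ 2 else 0)
        atTop)
      atTop (nhds 0))
    -- `ν` is a weak-∗ accumulation point of the densities `|e^{itΔ}u_n|²`
    (ν : Measure ((Fin d → AddCircle (2 * π)) × AddCircle (2 * π)))
    [IsFiniteMeasure ν]
    (φ : ℕ → ℕ) (hφ : StrictMono φ)
    (hweak : ∀ (g : C(AddCircle (2 * π), ℂ))
        (f : C(Fin d → AddCircle (2 * π), ℂ)),
      Tendsto
        (fun m => ∫ p, g p.2 * f p.1 *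
          ((‖schrodingerSol d (u (φ m)) p‖ ^ 2 : ℝ) : ℂ) ∂volume)
        atTop (nhds (∫ p, g p.2 * f p.1 ∂ν))) :
    -- then the Fourier coefficients `ν̂(l,s)` of `ν` belong to `ℓ^d(ℤ^{d+1})`
    Summable fun ls : (Fin d → ℤ) × ℤ =>
      ‖∫ p, (∏ i : Fin d, fourier (-(ls.1 i)) (p.1 i)) * fourier (-ls.2) p.2 ∂ν‖ ^ d := by
  obtain ⟨M, hM⟩ := hbd
  have hM0 : 0 ≤ M := (tsum_nonneg fun k => by positivity).trans (hM 0)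
  have hck : ∀ k, Tendsto (fun n => ‖u n k‖) atTop (nhds 0) := by
    intro k
    have hsq0 : Tendsto (fun n => ‖u n k‖ ^ 2) atTop (nhds 0) := by
      rw [tendsto_order]
      refine ⟨fun a ha => Eventually.of_forall fun n => ha.trans_le (by positivity), ?_⟩
      intro ε hε
      have h1 := (hS1.eventually (gt_mem_nhds hε)).and self_mem_nhdsWithin
      obtain ⟨δ, hδ, hδ0⟩ := h1.exists
      have hsum : ∀ n, Summable fun k' : Fin d → ℤ =>
          if znorm k' < δ / h n then ‖u n k'‖ ^ 2 else 0 := fun n =>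
        Summable.of_nonneg_of_le (fun k' => by split_ifs <;> positivity)
          (fun k' => by split_ifs <;> first | exact le_rfl | positivity) (hsq n)
      have hbdd : IsBoundedUnder (· ≤ ·) atTop
          (fun n => ∑' k' : Fin d → ℤ, if znorm k' < δ / h n then ‖u n k'‖ ^ 2 else 0) := by
        refine isBoundedUnder_of ⟨M, fun n => le_trans ?_ (hM n)⟩
        exact (hsum n).tsum_le_tsum (fun k' => by split_ifs <;> first | exact le_rfl | positivity) (hsq n)
      have h2 := eventually_lt_of_limsup_lt hδ hbdd
      have h3 : ∀ᶠ n in atTop, h n * (znorm k + 1) < δ := by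
        have : Tendsto (fun n => h n * (znorm k + 1)) atTop (nhds 0) := by
          simpa using hto.mul_const (znorm k + 1)
        exact this.eventually (gt_mem_nhds hδ0)
      filter_upwards [h2, h3] with n hn2 hn3
      refine lt_of_le_of_lt ?_ hn2
      have hlt : znorm k < δ / h n := by
        rw [lt_div_iff₀ (hpos n)]
        nlinarith [hpos n]
      have := (hsum n).le_tsum k (fun k' _ => by split_ifs <;> positivity)
      simpa [hlt] using this
    have := hsq0.sqrt
    simpa [Real.sqrt_sq] using this
  set N : (Fin d → ℤ) × ℤ → ℂ := fun ls =>
    ∫ p, (∏ i : Fin d, fourier (-(ls.1 i)) (p.1 i)) * fourier (-ls.2) p.2 ∂ν with hN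
  have hw : ∀ τ : (Fin d → ℤ) × ℤ, Tendsto (fun m => ∫ p, emF (-τ.1) (-τ.2) p *
      ((‖schrodingerSol d (u (φ m)) p‖ ^ 2 : ℝ) : ℂ)) atTop (nhds (N τ)) := by
    intro τ
    have := hweak (fourier (-τ.2)) ⟨fun x => ∏ i : Fin d, fourier (-(τ.1 i)) (x i), by fun_prop⟩
    simp only [ContinuousMap.coe_mk] at this
    have hc : ∀ p : (Fin d → AddCircle (2 * π)) × AddCircle (2 * π),
        (fourier (-τ.2) p.2 : ℂ) * ∏ i : Fin d, (fourier (-(τ.1 i)) (p.1 i) : ℂ) =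
          emF (-τ.1) (-τ.2) p := fun p => mul_comm _ _
    simp only [hc] at this
    exact this
  have hfin : ∀ F : Finset ((Fin d → ℤ) × ℤ), (0 : (Fin d → ℤ) × ℤ) ∉ F →
      ∑ τ ∈ F, ‖N τ‖ ^ d ≤ VV d ^ d * (d * M ^ d) := by
    intro F hF
    obtain ⟨B, hB⟩ := main_bound ⟨0, hd⟩ F hF
    have herr : Tendsto (fun m => VV d * (√M * ∑ k ∈ B, ‖u (φ m) k‖)) atTop (nhds 0) := by
      have : Tendsto (fun m => ∑ k ∈ B, ‖u (φ m) k‖) atTop (nhds (∑ k ∈ B, 0)) :=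
        tendsto_finsetSum _ fun k _ => (hck k).comp hφ.tendsto_atTop
      simpa using (this.const_mul (√M)).const_mul (VV d)
    have hlim : Tendsto (fun m => ∑ τ ∈ F, (max (‖∫ p, emF (-τ.1) (-τ.2) p *
        ((‖schrodingerSol d (u (φ m)) p‖ ^ 2 : ℝ) : ℂ)‖ -
          VV d * (√M * ∑ k ∈ B, ‖u (φ m) k‖)) 0) ^ d) atTop
        (nhds (∑ τ ∈ F, (max (‖N τ‖ - 0) 0) ^ d)) := by
      apply tendsto_finsetSum
      intro τ _
      exact (((hw τ).norm.sub herr).max tendsto_const_nhds).pow d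
    have := le_of_tendsto' hlim fun m => hB (u (φ m)) M (hsq _) (hM _)
    simpa using this
  refine summable_of_sum_le (c := VV d ^ d * (d * M ^ d) + ‖N 0‖ ^ d)
    (fun τ => by positivity) fun F => ?_
  have h1 := hfin (F.erase 0) (by simp)
  calc ∑ τ ∈ F, ‖N τ‖ ^ d ≤ ∑ τ ∈ insert 0 (F.erase 0), ‖N τ‖ ^ d :=
        Finset.sum_le_sum_of_subset_of_nonneg
          (fun x hx => by by_cases h0 : x = 0 <;> simp [h0, hx])
          fun τ _ _ => by positivity
    _ = ‖N 0‖ ^ d + ∑ τ ∈ F.erase 0, ‖N τ‖ ^ d := Finset.sum_insert (by simp)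
    _ ≤ _ := by linarith
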